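/- arXiv:0902.0568 — 6 statements merged into one kernel-verified Lean document; each statement's English description precedes it below -/
import Mathlib

section
/- For every Schwartz function x : ℝ → ℂ, one has ℱ(𝔞†x) = i·𝔞†(ℱx) and ℱ(𝔞x) = −i·𝔞(ℱx). -/
open MeasureTheory

/-- The creation operator `𝔞†`: `(𝔞†x)(t) = -x'(t) + t·x(t)`. -/
noncomputable def creation (x : ℝ → ℂ) : ℝ → ℂ := fun t => -deriv x t + (t : ℂ) * x t

/-- The annihilation operator `𝔞`: `(𝔞x)(t) = x'(t) + t·x(t)`. -/
noncomputable def annihilation (x : ℝ → ℂ) : ℝ → ℂ := fun t => deriv x t + (t : ℂ) * x t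

/-- The Fourier operator `(ℱx)(t) = (2π)^{-1/2} ∫ x(ξ) e^{itξ} dξ`. -/
noncomputable def fourierOp (x : ℝ → ℂ) : ℝ → ℂ :=
  fun t => (Real.sqrt (2 * Real.pi) : ℂ)⁻¹ *
    ∫ ξ : ℝ, x ξ * Complex.exp (Complex.I * (t : ℂ) * (ξ : ℂ))

open scoped FourierTransform SchwartzMap

/-- The Fourier operator is a rescaling of Mathlib's Fourier transform. -/
lemma fourierOp_eq_fourier (f : ℝ → ℂ) (t : ℝ) :
    fourierOp f t = (Real.sqrt (2 * Real.pi) : ℂ)⁻¹ * 𝓕 f (-(2 * Real.pi)⁻¹ * t) := by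
  rw [fourierOp, Real.fourier_real_eq_integral_exp_smul]
  congr 1
  refine integral_congr_ae (.of_forall fun ξ => ?_)
  have hπ : (Real.pi : ℂ) ≠ 0 := by exact_mod_cast Real.pi_ne_zero
  simp only [smul_eq_mul]
  rw [mul_comm]
  congr 2
  push_cast
  field_simp

lemma fourierOp_add {f g : ℝ → ℂ} (hf : Integrable f) (hg : Integrable g) (t : ℝ) :
    fourierOp (fun ξ => f ξ + g ξ) t = fourierOp f t + fourierOp g t := by
  have h := congrFun (VectorFourier.fourierIntegral_add Real.continuous_fourierChar
    (L := innerₗ ℝ) continuous_inner hf hg) (-(2 * Real.pi)⁻¹ * t)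
  simp only [fourierOp_eq_fourier, ← mul_add]
  exact congrArg _ h

lemma fourierOp_neg (f : ℝ → ℂ) (t : ℝ) : fourierOp (fun ξ => -f ξ) t = -fourierOp f t := by
  simp [fourierOp, integral_neg]

lemma SchwartzMap.integrable_deriv (x : 𝓢(ℝ, ℂ)) : Integrable (deriv x) :=
  (SchwartzMap.derivCLM ℂ ℂ x).integrable

lemma SchwartzMap.integrable_ofReal_mul (x : 𝓢(ℝ, ℂ)) :
    Integrable (fun ξ : ℝ => (ξ : ℂ) * x ξ) := by
  refine (integrable_norm_iff (by fun_prop)).1 ?_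
  simpa using x.integrable_pow_mul volume 1

/-- The Fourier operator turns differentiation into multiplication by `-it`. -/
lemma fourierOp_deriv (x : 𝓢(ℝ, ℂ)) (t : ℝ) :
    fourierOp (deriv x) t = -Complex.I * t * fourierOp x t := by
  rw [fourierOp_eq_fourier, fourierOp_eq_fourier,
    Real.fourier_deriv x.integrable x.differentiable x.integrable_deriv]
  have hπ : (Real.pi : ℂ) ≠ 0 := by exact_mod_cast Real.pi_ne_zero
  simp only [smul_eq_mul]
  push_cast
  field_simp

/-- The derivative of the Fourier operator is `i` times the transform of `ξ ↦ ξ x(ξ)`. -/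
lemma deriv_fourierOp (x : 𝓢(ℝ, ℂ)) (t : ℝ) :
    deriv (fourierOp x) t = Complex.I * fourierOp (fun ξ => (ξ : ℂ) * x ξ) t := by
  have hπ : (Real.pi : ℂ) ≠ 0 := by exact_mod_cast Real.pi_ne_zero
  have hmul : Integrable (fun ξ : ℝ => ξ • x ξ) := by
    simpa only [Complex.real_smul] using x.integrable_ofReal_mul
  have hd := (Real.hasDerivAt_fourier x.integrable hmul (-(2 * Real.pi)⁻¹ * t)).scomp t
    ((hasDerivAt_id t).const_mul (-(2 * Real.pi)⁻¹))
  have hsmul : 𝓕 (fun ξ : ℝ => (-2 * Real.pi * Complex.I * ξ) • x ξ) =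
      (-2 * Real.pi * Complex.I) • 𝓕 (fun ξ : ℝ => (ξ : ℂ) * x ξ) := by
    simp only [mul_smul _ (Complex.ofReal _), smul_eq_mul (Complex.ofReal _)]
    exact VectorFourier.fourierIntegral_const_smul _ _ _ _ _
  rw [funext (fourierOp_eq_fourier x), fourierOp_eq_fourier]
  refine (hd.const_mul _).deriv.trans ?_
  rw [hsmul]
  simp only [Pi.smul_apply, smul_eq_mul, Complex.real_smul]
  push_cast
  field_simp

/-- For every Schwartz function `x`, `ℱ(𝔞†x) = i·𝔞†(ℱx)` and `ℱ(𝔞x) = −i·𝔞(ℱx)`. -/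
theorem fourier_creation_annihilation (x : SchwartzMap ℝ ℂ) :
    (∀ t : ℝ, fourierOp (creation ⇑x) t = Complex.I * creation (fourierOp ⇑x) t) ∧
    (∀ t : ℝ, fourierOp (annihilation ⇑x) t = -Complex.I * annihilation (fourierOp ⇑x) t) := by
  refine ⟨fun t => ?_, fun t => ?_⟩
  · unfold creation
    rw [fourierOp_add (f := fun ξ => -deriv x ξ) x.integrable_deriv.neg x.integrable_ofReal_mul,
      fourierOp_neg, fourierOp_deriv, deriv_fourierOp]
    linear_combination fourierOp (fun ξ => (ξ : ℂ) * x ξ) t * Complex.I_sq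
  · unfold annihilation
    rw [fourierOp_add x.integrable_deriv x.integrable_ofReal_mul, fourierOp_deriv, deriv_fourierOp]
    linear_combination fourierOp (fun ξ => (ξ : ℂ) * x ξ) t * Complex.I_sq
end

section
/- For every n ≥ 0 the Hermite function h_n = (𝔞†)ⁿ h₀ satisfies L h_n = (2n+1)·h_n, where (Lx)(t) = −x''(t) + t²·x(t). -/
open MeasureTheory

/-- The Hermite differential expression `(Lx)(t) = -x''(t) + t²·x(t)`. -/
noncomputable def hermiteL (x : ℝ → ℂ) : ℝ → ℂ :=
  fun t => -deriv (deriv x) t + (t : ℂ) ^ 2 * x t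

/-- The Hermite functions `h₀(t) = e^{−t²/2}`, `h_{n+1} = 𝔞† h_n`. -/
noncomputable def hermiteFun : ℕ → ℝ → ℂ
  | 0 => fun t => Complex.exp (-(t : ℂ) ^ 2 / 2)
  | n + 1 => creation (hermiteFun n)

/-- `x` is a twice differentiable solution of `L x = c • x`. -/
def IsHermiteSolution (c : ℂ) (x : ℝ → ℂ) : Prop :=
  Differentiable ℝ x ∧ ∀ t : ℝ, HasDerivAt (deriv x) (((t : ℂ) ^ 2 - c) * x t) t

theorem IsHermiteSolution.hermiteL_eq {c : ℂ} {x : ℝ → ℂ} (hx : IsHermiteSolution c x) (t : ℝ) :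
    hermiteL x t = c * x t := by
  rw [hermiteL, (hx.2 t).deriv]
  ring

/-- The creation operator raises the eigenvalue of `L` by `2`. -/
theorem IsHermiteSolution.creation {c : ℂ} {x : ℝ → ℂ} (hx : IsHermiteSolution c x) :
    IsHermiteSolution (c + 2) (creation x) := by
  have hid (t : ℝ) : HasDerivAt (fun s : ℝ => (s : ℂ)) 1 t := (hasDerivAt_id t).ofReal_comp
  have hx₁ (t : ℝ) : HasDerivAt x (deriv x t) t := (hx.1 t).hasDerivAt
  have hcr (t : ℝ) : HasDerivAt (_root_.creation x)
      ((c + 1 - (t : ℂ) ^ 2) * x t + t * deriv x t) t := by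
    refine ((hx.2 t).neg.add ((hid t).mul (hx₁ t))).congr_deriv ?_
    ring
  refine ⟨fun t => (hcr t).differentiableAt, fun t => ?_⟩
  rw [funext fun s => (hcr s).deriv]
  refine (((((hid t).pow 2).const_sub (c + 1)).mul (hx₁ t)).add
    ((hid t).mul (hx.2 t))).congr_deriv ?_
  simp only [_root_.creation, Pi.pow_apply]
  push_cast
  ring

theorem isHermiteSolution_hermiteFun_zero : IsHermiteSolution 1 (hermiteFun 0) := by
  have hid (t : ℝ) : HasDerivAt (fun s : ℝ => (s : ℂ)) 1 t := (hasDerivAt_id t).ofReal_comp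
  have h₀ (t : ℝ) : HasDerivAt (hermiteFun 0) (-(t : ℂ) * hermiteFun 0 t) t := by
    refine (((hid t).pow 2).neg.div_const 2).cexp.congr_deriv ?_
    simp only [hermiteFun, Pi.neg_apply, Pi.pow_apply]
    push_cast
    ring
  refine ⟨fun t => (h₀ t).differentiableAt, fun t => ?_⟩
  rw [funext fun s => (h₀ s).deriv]
  refine ((hid t).neg.mul (h₀ t)).congr_deriv ?_
  simp only [Pi.neg_apply]
  ring

theorem isHermiteSolution_hermiteFun (n : ℕ) :
    IsHermiteSolution (2 * (n : ℂ) + 1) (hermiteFun n) := by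
  induction n with
  | zero => simpa using isHermiteSolution_hermiteFun_zero
  | succ n ih =>
    have hc : 2 * ((n + 1 : ℕ) : ℂ) + 1 = 2 * (n : ℂ) + 1 + 2 := by
      push_cast
      ring
    rw [hc, hermiteFun]
    exact ih.creation

/-- For every `n ≥ 0`, `L h_n = (2n+1)·h_n`. -/
theorem hermiteL_hermiteFun (n : ℕ) :
    ∀ t : ℝ, hermiteL (hermiteFun n) t = (2 * (n : ℂ) + 1) * hermiteFun n t := by
  exact (isHermiteSolution_hermiteFun n).hermiteL_eq
end

section
/- For every n ≥ 0 the Hermite function h_n is an eigenfunction of the Fourier operator: ℱh_n = iⁿ·h_n, i.e. (2π)^{−1/2} ∫_ℝ h_n(ξ) e^{itξ} dξ = iⁿ·h_n(t) for all t ∈ ℝ. -/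
open MeasureTheory

open scoped FourierTransform

/-- The Gaussian times a polynomial is integrable. -/
theorem integrable_polynomial_mul_gaussian (p : Polynomial ℂ) :
    Integrable fun t : ℝ => p.eval (t : ℂ) * Complex.exp (-(t : ℂ) ^ 2 / 2) := by
  induction p using Polynomial.induction_on' with
  | add p q hp hq => simpa only [Polynomial.eval_add, add_mul] using! hp.add hq
  | monomial n a =>
    have h : Integrable fun t : ℝ => t ^ (n : ℝ) * Real.exp (-(1 / 2) * t ^ 2) :=
      integrable_rpow_mul_exp_neg_mul_sq (by norm_num) (neg_one_lt_zero.trans_le n.cast_nonneg)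
    refine (h.ofReal.const_mul a).congr (.of_forall fun t => ?_)
    simp only [Real.rpow_natCast, Polynomial.eval_monomial, RCLike.ofReal_mul, RCLike.ofReal_pow,
      Complex.coe_algebraMap, Complex.ofReal_exp, mul_assoc]
    push_cast
    ring_nf

theorem hasDerivAt_polynomial_mul_gaussian (p : Polynomial ℂ) (t : ℝ) :
    HasDerivAt (fun s : ℝ => p.eval (s : ℂ) * Complex.exp (-(s : ℂ) ^ 2 / 2))
      ((p.derivative - Polynomial.X * p).eval (t : ℂ) * Complex.exp (-(t : ℂ) ^ 2 / 2)) t := by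
  have hg : HasDerivAt (fun z : ℂ => Complex.exp (-z ^ 2 / 2))
      (Complex.exp (-(t : ℂ) ^ 2 / 2) * (-(2 * t) / 2)) t := by
    simpa using (((hasDerivAt_id (t : ℂ)).pow 2).neg.div_const 2).cexp
  refine ((p.hasDerivAt (t : ℂ)).mul hg).comp_ofReal.congr_deriv ?_
  simp only [Polynomial.eval_sub, Polynomial.eval_mul, Polynomial.eval_X]
  ring

/-- The Hermite functions are polynomial multiples of the Gaussian. -/
theorem exists_hermiteFun_eq_polynomial_mul_gaussian (n : ℕ) :
    ∃ p : Polynomial ℂ,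
      hermiteFun n = fun t : ℝ => p.eval (t : ℂ) * Complex.exp (-(t : ℂ) ^ 2 / 2) := by
  induction n with
  | zero => exact ⟨1, by simp [hermiteFun]⟩
  | succ n ih =>
    obtain ⟨p, hp⟩ := ih
    refine ⟨2 * Polynomial.X * p - p.derivative, funext fun t => ?_⟩
    simp only [hermiteFun, creation, hp, (hasDerivAt_polynomial_mul_gaussian p t).deriv,
      Polynomial.eval_sub, Polynomial.eval_mul, Polynomial.eval_X, Polynomial.eval_ofNat]
    ring

theorem differentiable_hermiteFun (n : ℕ) : Differentiable ℝ (hermiteFun n) := by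
  obtain ⟨p, hp⟩ := exists_hermiteFun_eq_polynomial_mul_gaussian n
  exact hp ▸ fun t => (hasDerivAt_polynomial_mul_gaussian p t).differentiableAt

theorem integrable_hermiteFun (n : ℕ) : Integrable (hermiteFun n) := by
  obtain ⟨p, hp⟩ := exists_hermiteFun_eq_polynomial_mul_gaussian n
  exact hp ▸ integrable_polynomial_mul_gaussian p

theorem integrable_deriv_hermiteFun (n : ℕ) : Integrable (deriv (hermiteFun n)) := by
  obtain ⟨p, hp⟩ := exists_hermiteFun_eq_polynomial_mul_gaussian n
  rw [hp, funext fun t => (hasDerivAt_polynomial_mul_gaussian p t).deriv]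
  exact integrable_polynomial_mul_gaussian _

theorem integrable_id_mul_hermiteFun (n : ℕ) :
    Integrable fun t : ℝ => (t : ℂ) * hermiteFun n t := by
  obtain ⟨p, hp⟩ := exists_hermiteFun_eq_polynomial_mul_gaussian n
  refine (integrable_polynomial_mul_gaussian (Polynomial.X * p)).congr (.of_forall fun t => ?_)
  simp only [hp, Polynomial.eval_mul, Polynomial.eval_X, mul_assoc]

/-- The unnormalized Fourier integral with kernel `e^{itξ}` is a rescaling of Mathlib's. -/
theorem integral_mul_cexp_eq_fourier (x : ℝ → ℂ) (t : ℝ) :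
    ∫ ξ : ℝ, x ξ * Complex.exp (Complex.I * (t : ℂ) * (ξ : ℂ)) = 𝓕 x (-t / (2 * Real.pi)) := by
  rw [Real.fourier_real_eq_integral_exp_smul]
  refine integral_congr_ae (.of_forall fun ξ => ?_)
  have hpi : (Real.pi : ℂ) ≠ 0 := by exact_mod_cast Real.pi_ne_zero
  simp only [smul_eq_mul]
  rw [mul_comm]
  congr 2
  push_cast
  field_simp

theorem MeasureTheory.Integrable.mul_cexp_I_mul {x : ℝ → ℂ} (hx : Integrable x) (t : ℝ) :
    Integrable fun ξ : ℝ => x ξ * Complex.exp (Complex.I * (t : ℂ) * (ξ : ℂ)) :=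
  hx.mul_bdd (c := 1) (by fun_prop) (.of_forall fun ξ => by simp [Complex.norm_exp])

/-- The Fourier integral intertwines the creation operator with `i` times itself. -/
theorem integral_creation_mul_cexp {x : ℝ → ℂ} (hx : Integrable x) (hd : Differentiable ℝ x)
    (hx' : Integrable (deriv x)) (htx : Integrable fun t : ℝ => (t : ℂ) * x t) (t : ℝ) :
    ∫ ξ : ℝ, creation x ξ * Complex.exp (Complex.I * (t : ℂ) * (ξ : ℂ)) =
      Complex.I * creation
        (fun s : ℝ => ∫ ξ : ℝ, x ξ * Complex.exp (Complex.I * (s : ℂ) * (ξ : ℂ))) t := by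
  have hpi : (Real.pi : ℂ) ≠ 0 := by exact_mod_cast Real.pi_ne_zero
  have hderiv : HasDerivAt (fun s : ℝ => 𝓕 x (-s / (2 * Real.pi)))
      (Complex.I * 𝓕 (fun ξ : ℝ => (ξ : ℂ) * x ξ) (-t / (2 * Real.pi))) t := by
    have hF := Real.hasDerivAt_fourier hx (by simpa using htx) (-t / (2 * Real.pi))
    have hscale : HasDerivAt (fun s : ℝ => -s / (2 * Real.pi)) (-1 / (2 * Real.pi)) t :=
      (hasDerivAt_id t).neg.div_const _
    refine (hF.scomp t hscale).congr_deriv ?_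
    have hmul : 𝓕 (fun ξ : ℝ => (-2 * Real.pi * Complex.I * ξ) • x ξ) (-t / (2 * Real.pi)) =
        -2 * Real.pi * Complex.I * 𝓕 (fun ξ : ℝ => (ξ : ℂ) * x ξ) (-t / (2 * Real.pi)) := by
      rw [← integral_mul_cexp_eq_fourier, ← integral_mul_cexp_eq_fourier, ← integral_const_mul]
      simp only [smul_eq_mul, mul_assoc]
    rw [hmul, Complex.real_smul]
    push_cast
    field_simp
  have hsplit : ∫ ξ : ℝ, creation x ξ * Complex.exp (Complex.I * (t : ℂ) * (ξ : ℂ)) =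
      -(∫ ξ : ℝ, deriv x ξ * Complex.exp (Complex.I * (t : ℂ) * (ξ : ℂ))) +
        ∫ ξ : ℝ, ((ξ : ℂ) * x ξ) * Complex.exp (Complex.I * (t : ℂ) * (ξ : ℂ)) := by
    rw [← integral_neg, ← integral_add (by exact (hx'.mul_cexp_I_mul t).neg)
      (htx.mul_cexp_I_mul t)]
    simp only [creation, add_mul, neg_mul]
  rw [hsplit]
  simp only [integral_mul_cexp_eq_fourier, creation, hderiv.deriv,
    Real.fourier_deriv hx hd hx', smul_eq_mul]
  generalize 𝓕 (fun ξ : ℝ => (ξ : ℂ) * x ξ) (-t / (2 * Real.pi)) = u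
  push_cast
  field_simp
  linear_combination u * Complex.I_sq

theorem integral_gaussian_mul_cexp (t : ℝ) :
    ∫ ξ : ℝ, Complex.exp (-(ξ : ℂ) ^ 2 / 2) * Complex.exp (Complex.I * (t : ℂ) * (ξ : ℂ)) =
      Real.sqrt (2 * Real.pi) * Complex.exp (-(t : ℂ) ^ 2 / 2) := by
  have h := fourierIntegral_gaussian (b := 1 / 2) (by norm_num) (t : ℂ)
  have hsqrt : ((Real.pi : ℂ) / (1 / 2)) ^ (1 / 2 : ℂ) = Real.sqrt (2 * Real.pi) := by
    rw [Real.sqrt_eq_rpow, Complex.ofReal_cpow (by positivity)]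
    push_cast
    congr 1
    ring
  rw [hsqrt] at h
  convert h using 1
  · refine integral_congr_ae (.of_forall fun ξ => ?_)
    beta_reduce
    rw [mul_comm]
    congr 2
    ring
  · congr 2
    ring

/-- Every Hermite function is an eigenfunction of the Fourier operator:
`(2π)^{−1/2} ∫ h_n(ξ) e^{itξ} dξ = iⁿ·h_n(t)`. -/
theorem fourier_hermiteFun (n : ℕ) (t : ℝ) :
    (Real.sqrt (2 * Real.pi) : ℂ)⁻¹ *
      ∫ ξ : ℝ, hermiteFun n ξ * Complex.exp (Complex.I * (t : ℂ) * (ξ : ℂ)) =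
    Complex.I ^ n * hermiteFun n t := by
  have hc : (Real.sqrt (2 * Real.pi) : ℂ) ≠ 0 := by
    exact_mod_cast (Real.sqrt_pos.2 Real.two_pi_pos).ne'
  rw [inv_mul_eq_iff_eq_mul₀ hc]
  induction n generalizing t with
  | zero => simpa [hermiteFun] using integral_gaussian_mul_cexp t
  | succ n ih =>
    rw [hermiteFun, integral_creation_mul_cexp (integrable_hermiteFun n)
      (differentiable_hermiteFun n) (integrable_deriv_hermiteFun n)
      (integrable_id_mul_hermiteFun n), funext ih]
    simp only [creation, deriv_const_mul_field]
    ring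
end

section
/- For every ζ ∈ ℂ with 0 < Re ζ < 1, the improper integrals lim_{R→+∞} ∫₀^R (cos s)·s^{ζ−1} ds and lim_{R→+∞} ∫₀^R (sin s)·s^{ζ−1} ds exist and equal cos(πζ/2)·Γ(ζ) and sin(πζ/2)·Γ(ζ) respectively, where Γ is the Euler Gamma function. -/
open MeasureTheory

section LaplaceTruncated

open Complex Set Filter Topology

/-- The truncated Laplace transform `z ↦ ∫₀^R e^{-zs} s^{ζ-1} ds` of `s ^ (ζ - 1)`. -/
noncomputable def truncatedLaplaceCpow (ζ : ℂ) (R : ℝ) (z : ℂ) : ℂ :=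
  ∫ s in (0:ℝ)..R, exp (-(z * s)) * (s : ℂ) ^ (ζ - 1)

variable {ζ : ℂ}

lemma intervalIntegrable_continuous_mul_cpow (h0 : 0 < ζ.re) (R : ℝ) {g : ℝ → ℂ}
    (hg : Continuous g) :
    IntervalIntegrable (fun s : ℝ => g s * (s : ℂ) ^ (ζ - 1)) volume 0 R :=
  (intervalIntegral.intervalIntegrable_cpow' (by simpa using h0)).continuousOn_mul hg.continuousOn

lemma hasDerivAt_truncatedLaplaceCpow (h0 : 0 < ζ.re) (R : ℝ) (z : ℂ) :
    HasDerivAt (truncatedLaplaceCpow ζ R)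
      (∫ s in (0:ℝ)..R, -(s : ℂ) * exp (-(z * s)) * (s : ℂ) ^ (ζ - 1)) z := by
  have hint : IntervalIntegrable (fun s : ℝ => (s : ℂ) ^ (ζ - 1)) volume 0 R :=
    intervalIntegral.intervalIntegrable_cpow' (by simpa using h0)
  refine (intervalIntegral.hasDerivAt_integral_of_dominated_loc_of_deriv_le
    (F := fun (z : ℂ) (s : ℝ) => exp (-(z * s)) * (s : ℂ) ^ (ζ - 1))
    (F' := fun (z : ℂ) (s : ℝ) => -(s : ℂ) * exp (-(z * s)) * (s : ℂ) ^ (ζ - 1))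
    (bound := fun s : ℝ => |R| * Real.exp ((‖z‖ + 1) * |R|) * ‖(s : ℂ) ^ (ζ - 1)‖)
    (Metric.ball_mem_nhds z one_pos) (Eventually.of_forall fun w => ?_) ?_ ?_ ?_ ?_ ?_).2
  · exact (intervalIntegrable_iff.1
      (intervalIntegrable_continuous_mul_cpow h0 R (by fun_prop))).aestronglyMeasurable
  · exact intervalIntegrable_continuous_mul_cpow h0 R (by fun_prop)
  · exact (intervalIntegrable_iff.1
      (intervalIntegrable_continuous_mul_cpow h0 R (by fun_prop))).aestronglyMeasurable
  · refine Eventually.of_forall fun t ht w hw => ?_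
    have htR : |t| ≤ |R| := by
      simpa using abs_sub_left_of_mem_uIcc (uIoc_subset_uIcc ht)
    have hwz : ‖w‖ ≤ ‖z‖ + 1 := by
      have := norm_le_norm_add_norm_sub' w z
      rw [mem_ball_iff_norm] at hw
      linarith
    rw [norm_mul, norm_mul, norm_neg, norm_real, Real.norm_eq_abs]
    have hexp : ‖exp (-(w * t))‖ ≤ Real.exp ((‖z‖ + 1) * |R|) := by
      refine (norm_exp_le_exp_norm _).trans (Real.exp_le_exp.2 ?_)
      rw [norm_neg, norm_mul, norm_real, Real.norm_eq_abs]
      gcongr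
    gcongr
  · exact hint.norm.const_mul _
  · refine Eventually.of_forall fun t _ w _ => ?_
    have h := ((hasDerivAt_mul_const (x := w) (t : ℂ)).neg.cexp).mul_const ((t : ℂ) ^ (ζ - 1))
    exact h.congr_deriv (by simp only [Pi.neg_apply]; ring)

/-- Integration by parts gives the Euler-type equation satisfied by the truncated transform. -/
lemma truncatedLaplaceCpow_euler (h0 : 0 < ζ.re) {R : ℝ} (hR : 0 ≤ R) (z : ℂ) :
    ζ * truncatedLaplaceCpow ζ R z +
      z * (∫ s in (0:ℝ)..R, -(s : ℂ) * exp (-(z * s)) * (s : ℂ) ^ (ζ - 1)) =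
    exp (-(z * R)) * (R : ℂ) ^ ζ := by
  have hζ : ζ ≠ 0 := by rintro rfl; simp at h0
  rw [truncatedLaplaceCpow, ← intervalIntegral.integral_const_mul,
    ← intervalIntegral.integral_const_mul, ← intervalIntegral.integral_add
      ((intervalIntegrable_continuous_mul_cpow h0 R (by fun_prop)).const_mul _)
      ((intervalIntegrable_continuous_mul_cpow h0 R (by fun_prop)).const_mul _)]
  rw [intervalIntegral.integral_eq_sub_of_hasDerivAt_of_le
    (f := fun s : ℝ => exp (-(z * s)) * (s : ℂ) ^ ζ) hR]
  · simp [hζ]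
  · exact (Continuous.mul (by fun_prop) (continuous_ofReal_cpow_const h0)).continuousOn
  · intro x hx
    have hx0 : (x : ℂ) ≠ 0 := ofReal_ne_zero.2 hx.1.ne'
    have h := (((hasDerivAt_id x).ofReal_comp.const_mul z).neg.cexp).mul
      (hasDerivAt_ofReal_cpow_const hx.1.ne' hζ)
    refine h.congr_deriv ?_
    have hpow : (x : ℂ) ^ ζ = x * (x : ℂ) ^ (ζ - 1) := by
      rw [cpow_sub _ _ hx0, cpow_one]; field_simp
    simp only [Pi.neg_apply, id, hpow]
    push_cast
    ring
  · exact ((intervalIntegrable_continuous_mul_cpow h0 R (by fun_prop)).const_mul _).add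
      ((intervalIntegrable_continuous_mul_cpow h0 R (by fun_prop)).const_mul _)

/-- Derivative of the truncated Gamma integral along the ray of direction `e^{aθ}`. -/
lemma hasDerivAt_exp_mul_truncatedLaplaceCpow (h0 : 0 < ζ.re) {R : ℝ} (hR : 0 ≤ R) (a : ℂ)
    (θ : ℝ) :
    HasDerivAt (fun θ : ℝ => exp (a * θ * ζ) * truncatedLaplaceCpow ζ R (exp (a * θ)))
      (a * exp (a * θ * ζ) * (exp (-(exp (a * θ) * R)) * (R : ℂ) ^ ζ)) θ := by
  rw [← truncatedLaplaceCpow_euler h0 hR]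
  have hlin : HasDerivAt (fun θ : ℝ => a * (θ : ℂ)) a θ := by
    simpa using (hasDerivAt_id θ).ofReal_comp.const_mul a
  have h := (hlin.mul_const ζ).cexp.mul
    ((hasDerivAt_truncatedLaplaceCpow h0 R (exp (a * θ))).comp θ hlin.cexp)
  exact h.congr_deriv (by simp only [Function.comp]; ring)

/-- Jordan's estimate for the arc of radius `R` between the directions `1` and `e^{±iπ/2}`. -/
lemma norm_exp_mul_truncatedLaplaceCpow_sub_le (h0 : 0 < ζ.re) {R : ℝ} (hR : 0 < R) {ε : ℝ}
    (hε : |ε| = 1) :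
    ‖exp (ε * I * (Real.pi / 2 : ℝ) * ζ) *
        truncatedLaplaceCpow ζ R (exp (ε * I * (Real.pi / 2 : ℝ))) -
      truncatedLaplaceCpow ζ R 1‖ ≤
    Real.exp (Real.pi / 2 * |ζ.im|) * (Real.pi / 2) * R ^ (-(1 - ζ.re)) := by
  set C := Real.exp (Real.pi / 2 * |ζ.im|)
  have hderiv := hasDerivAt_exp_mul_truncatedLaplaceCpow h0 hR.le (ε * I)
  have key := image_norm_le_of_norm_deriv_right_le_deriv_boundary
    (a := 0) (b := Real.pi / 2)
    (f := fun θ : ℝ => exp (ε * I * θ * ζ) * truncatedLaplaceCpow ζ R (exp (ε * I * θ)) -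
      truncatedLaplaceCpow ζ R 1)
    (B := fun θ => C * (Real.pi / 2) * R ^ (-(1 - ζ.re)) * Real.exp (-(R * (1 - 2 / Real.pi * θ))))
    (B' := fun θ => C * R ^ ζ.re * Real.exp (-(R * (1 - 2 / Real.pi * θ))))
    (fun θ _ => ((hderiv θ).sub_const _).continuousAt.continuousWithinAt)
    (fun θ _ => ((hderiv θ).sub_const _).hasDerivWithinAt)
    (by simp; positivity) (fun θ => ?_) (fun θ hθ => ?_)
    (right_mem_Icc.2 (by positivity : (0:ℝ) ≤ Real.pi / 2))
  · exact key.trans_eq (by simp)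
  · have h := ((((hasDerivAt_id θ).const_mul (2 / Real.pi)).const_sub 1).const_mul
      R).neg.exp.const_mul (C * (Real.pi / 2) * R ^ (-(1 - ζ.re)))
    refine h.congr_deriv ?_
    have hpow : R ^ ζ.re = R ^ (-(1 - ζ.re)) * R := by
      rw [← Real.rpow_add_one hR.ne']; congr 1; ring
    simp only [Pi.neg_apply, id, hpow]
    field_simp
  · have hcos : (exp (ε * I * θ) * R).re = R * Real.cos θ := by
      have : (ε * I * θ : ℂ) = (ε * θ : ℝ) * I := by push_cast; ring
      rw [this, re_mul_ofReal, exp_ofReal_mul_I_re, mul_comm, ← Real.cos_abs, abs_mul, hε, one_mul,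
        Real.cos_abs]
    have hre : (ε * I * θ * ζ).re ≤ Real.pi / 2 * |ζ.im| := by
      have : (ε * I * θ * ζ).re = -(ε * θ * ζ.im) := by simp
      rw [this]
      refine (neg_le_abs _).trans ?_
      rw [abs_mul, abs_mul, hε, one_mul, abs_of_nonneg hθ.1]
      gcongr
      exact hθ.2.le
    have hnε : ‖(ε * I : ℂ)‖ = 1 := by simpa using hε
    rw [norm_mul, norm_mul (ε * I : ℂ), hnε, one_mul, norm_mul, norm_exp, norm_exp, neg_re, hcos,
      norm_cpow_eq_rpow_re_of_pos hR, mul_assoc C, mul_comm (R ^ ζ.re)]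
    gcongr
    · exact Real.exp_le_exp.2 hre
    · exact Real.one_sub_mul_le_cos hθ.1 hθ.2.le

lemma tendsto_truncatedLaplaceCpow_one (h0 : 0 < ζ.re) :
    Tendsto (fun R => truncatedLaplaceCpow ζ R 1) atTop (𝓝 (Gamma ζ)) := by
  rw [Gamma_eq_integral h0]
  refine (tendsto_partialGamma h0).congr fun R => ?_
  simp [truncatedLaplaceCpow, partialGamma]

/-- The Mellin transform of `e^{-iεs}`, `ε = ±1`, as an improper integral. -/
lemma tendsto_truncatedLaplaceCpow_mul_I (h0 : 0 < ζ.re) (h1 : ζ.re < 1) {ε : ℝ} (hε : |ε| = 1) :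
    Tendsto (fun R => truncatedLaplaceCpow ζ R (ε * I)) atTop
      (𝓝 (exp (-(ε * I * (Real.pi * ζ / 2))) * Gamma ζ)) := by
  have hdir : exp (ε * I * (Real.pi / 2 : ℝ)) = ε * I := by
    rcases (abs_eq zero_le_one).1 hε with rfl | rfl
    · have : ((1 : ℝ) * I * (Real.pi / 2 : ℝ) : ℂ) = Real.pi / 2 * I := by push_cast; ring
      rw [this, exp_pi_div_two_mul_I]; simp
    · have : ((-1 : ℝ) * I * (Real.pi / 2 : ℝ) : ℂ) = -(Real.pi / 2 * I) := by push_cast; ring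
      rw [this, exp_neg, exp_pi_div_two_mul_I]; simp
  have hlim : Tendsto (fun R => exp (ε * I * (Real.pi * ζ / 2)) * truncatedLaplaceCpow ζ R (ε * I) -
      truncatedLaplaceCpow ζ R 1) atTop (𝓝 0) := by
    refine squeeze_zero_norm'
      (a := fun R => Real.exp (Real.pi / 2 * |ζ.im|) * (Real.pi / 2) * R ^ (-(1 - ζ.re))) ?_ ?_
    · filter_upwards [eventually_gt_atTop 0] with R hR
      have h := norm_exp_mul_truncatedLaplaceCpow_sub_le h0 hR hε
      have harg : (ε * I * (Real.pi / 2 : ℝ) * ζ : ℂ) = ε * I * (Real.pi * ζ / 2) := by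
        push_cast; ring
      rwa [hdir, harg] at h
    · simpa using (tendsto_rpow_neg_atTop (sub_pos.2 h1)).const_mul
        (Real.exp (Real.pi / 2 * |ζ.im|) * (Real.pi / 2))
  have h := (hlim.add (tendsto_truncatedLaplaceCpow_one h0)).const_mul
    (exp (-(ε * I * (Real.pi * ζ / 2))))
  rw [zero_add] at h
  refine h.congr fun R => ?_
  rw [sub_add_cancel, ← mul_assoc, ← exp_add, neg_add_cancel, exp_zero, one_mul]

end LaplaceTruncated

/-- For `0 < Re ζ < 1`, `lim_{R→∞} ∫₀^R (cos s)·s^{ζ−1} ds = cos(πζ/2)·Γ(ζ)` and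
`lim_{R→∞} ∫₀^R (sin s)·s^{ζ−1} ds = sin(πζ/2)·Γ(ζ)`. -/
theorem cos_sin_mellin_integrals (ζ : ℂ) (h0 : 0 < ζ.re) (h1 : ζ.re < 1) :
    Filter.Tendsto (fun R : ℝ => ∫ s in (0:ℝ)..R, (Real.cos s : ℂ) * (s : ℂ) ^ (ζ - 1))
      Filter.atTop
      (nhds (Complex.cos (Real.pi * ζ / 2) * Complex.Gamma ζ)) ∧
    Filter.Tendsto (fun R : ℝ => ∫ s in (0:ℝ)..R, (Real.sin s : ℂ) * (s : ℂ) ^ (ζ - 1))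
      Filter.atTop
      (nhds (Complex.sin (Real.pi * ζ / 2) * Complex.Gamma ζ)) := by
  have hpos := tendsto_truncatedLaplaceCpow_mul_I h0 h1 (ε := 1) (by simp)
  have hneg := tendsto_truncatedLaplaceCpow_mul_I h0 h1 (ε := -1) (by simp)
  have hint (ε : ℝ) (R : ℝ) : IntervalIntegrable
      (fun s : ℝ => Complex.exp (-(ε * Complex.I * s)) * (s : ℂ) ^ (ζ - 1)) volume 0 R :=
    intervalIntegrable_continuous_mul_cpow h0 R (by fun_prop)
  constructor
  · convert (hneg.add hpos).div_const 2 using 1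
    · ext R
      rw [truncatedLaplaceCpow, truncatedLaplaceCpow,
        ← intervalIntegral.integral_add (hint _ R) (hint _ R), ← intervalIntegral.integral_div]
      congr with s
      rw [Complex.ofReal_cos, Complex.cos]
      push_cast
      ring_nf
    · rw [Complex.cos]
      push_cast
      ring_nf
  · convert ((hpos.sub hneg).mul_const Complex.I).div_const 2 using 1
    · ext R
      rw [truncatedLaplaceCpow, truncatedLaplaceCpow,
        ← intervalIntegral.integral_sub (hint _ R) (hint _ R),
        ← intervalIntegral.integral_mul_const, ← intervalIntegral.integral_div]
      congr with s
      rw [Complex.ofReal_sin, Complex.sin]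
      push_cast
      ring_nf
    · rw [Complex.sin]
      push_cast
      ring_nf
end

section
/- Let x : [0,∞) → ℂ be such that x is integrable and square integrable on (0,∞), its cosine Fourier transform x̂_c(t) = √(2/π)·∫₀^∞ x(s)·cos(ts) ds is integrable on (0,∞), and both x and x̂_c are continuous on [0,∞) and tend to 0 at +∞. Then for every ζ on the line Re ζ = 1/2, the Mellin transforms satisfy φ_{x̂_c}(ζ) = φ_x(1−ζ) · 2^{ζ−1/2} · Γ(ζ/2) / Γ(1/2 − ζ/2), where φ_f(ζ) = ∫₀^∞ t^{ζ−1} f(t) dt (the value φ_{x̂_c}(ζ) being the limit as R → ∞ of ∫₀^R t^{ζ−1} x̂_c(t) dt). -/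
open MeasureTheory

/-- The cosine Fourier transform `x̂_c(t) = √(2/π)·∫₀^∞ x(s)·cos(ts) ds`. -/
noncomputable def cosFT (x : ℝ → ℂ) : ℝ → ℂ :=
  fun t => (Real.sqrt (2 / Real.pi) : ℂ) *
    ∫ s in Set.Ioi (0:ℝ), x s * (Real.cos (t * s) : ℂ)

/-- The Gaussian-weighted integral `∫₀^∞ f(t)·exp(−b·t²) dt` as a function of `b`. -/
noncomputable def gaussianTransform (f : ℝ → ℂ) : ℝ → ℂ :=
  fun b => ∫ t in Set.Ioi (0:ℝ), f t * (Real.exp (-(b * t ^ 2)) : ℂ)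

lemma integrableOn_Ioi_cpow_mul {f : ℝ → ℂ} {a : ℂ} (ha : -1 < a.re) (ha0 : a.re ≤ 0)
    (hf : IntegrableOn f (Set.Ioi 0)) (hfc : ContinuousOn f (Set.Ici 0)) :
    IntegrableOn (fun t : ℝ => (t : ℂ) ^ a * f t) (Set.Ioi 0) := by
  rw [← Set.Ioc_union_Ioi_eq_Ioi (zero_le_one' ℝ)]
  refine IntegrableOn.union ?_ ?_
  · have hpow : IntegrableOn (fun t : ℝ => (t : ℂ) ^ a) (Set.Icc 0 1) := by
      rw [integrableOn_Icc_iff_integrableOn_Ioc,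
        ← intervalIntegrable_iff_integrableOn_Ioc_of_le zero_le_one]
      exact intervalIntegral.intervalIntegrable_cpow' ha
    exact (hpow.mul_continuousOn (hfc.mono Set.Icc_subset_Ici_self) isCompact_Icc).mono_set
      Set.Ioc_subset_Icc_self
  · refine Integrable.bdd_mul (c := 1) (hf.mono_set (Set.Ioi_subset_Ioi zero_le_one)) ?_ ?_
    · exact (Measurable.pow_const (by fun_prop) _).aestronglyMeasurable
    · filter_upwards [ae_restrict_mem measurableSet_Ioi] with t ht
      have ht1 : (1 : ℝ) < t := ht
      rw [Complex.norm_cpow_eq_rpow_re_of_pos (by linarith)]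
      exact Real.rpow_le_one_of_one_le_of_nonpos ht1.le ha0

lemma one_div_sq_cpow {t : ℝ} (ht : 0 < t) (w : ℂ) :
    (1 / ((t ^ 2 : ℝ) : ℂ)) ^ w = (t : ℂ) ^ (-(2 * w)) := by
  have h : (1 / ((t ^ 2 : ℝ) : ℂ)) = ((1 / t ^ 2 : ℝ) : ℂ) := by push_cast; ring
  rw [h, Complex.cpow_def_of_ne_zero (by exact_mod_cast (by positivity : (1 / t ^ 2 : ℝ) ≠ 0)),
    Complex.cpow_def_of_ne_zero (by exact_mod_cast ht.ne'),
    ← Complex.ofReal_log (by positivity), ← Complex.ofReal_log ht.le, one_div, Real.log_inv,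
    Real.log_pow]
  congr 1
  push_cast
  ring

lemma integrable_cpow_mul_gaussian {f : ℝ → ℂ} {w : ℂ} (hw : 0 < w.re)
    (hf : AEStronglyMeasurable f (volume.restrict (Set.Ioi 0)))
    (hfw : IntegrableOn (fun t : ℝ => (t : ℂ) ^ (-(2 * w)) * f t) (Set.Ioi 0)) :
    Integrable (Function.uncurry fun b t : ℝ =>
        (b : ℂ) ^ (w - 1) * (f t * (Real.exp (-(b * t ^ 2)) : ℂ)))
      ((volume.restrict (Set.Ioi 0)).prod (volume.restrict (Set.Ioi 0))) := by
  have hnorm : ∀ t : ℝ, ∀ b ∈ Set.Ioi (0:ℝ),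
      ‖(b : ℂ) ^ (w - 1) * (f t * (Real.exp (-(b * t ^ 2)) : ℂ))‖
        = ‖f t‖ * (b ^ (w.re - 1) * Real.exp (-(t ^ 2 * b))) := by
    intro t b hb
    rw [norm_mul, norm_mul, Complex.norm_cpow_eq_rpow_re_of_pos hb, Complex.norm_real,
      Real.norm_of_nonneg (Real.exp_pos _).le, mul_comm b]
    simp only [Complex.sub_re, Complex.one_re]
    ring
  have hmeas : AEStronglyMeasurable (Function.uncurry fun b t : ℝ =>
      (b : ℂ) ^ (w - 1) * (f t * (Real.exp (-(b * t ^ 2)) : ℂ)))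
      ((volume.restrict (Set.Ioi 0)).prod (volume.restrict (Set.Ioi 0))) := by
    refine AEStronglyMeasurable.mul ?_ (AEStronglyMeasurable.mul hf.comp_snd ?_)
    · exact (Measurable.pow_const (by fun_prop) _).aestronglyMeasurable
    · exact Measurable.aestronglyMeasurable (by fun_prop)
  rw [integrable_prod_iff' hmeas]
  constructor
  · filter_upwards [ae_restrict_mem measurableSet_Ioi] with t ht
    have ht0 : (0:ℝ) < t := ht
    have hsm : AEStronglyMeasurable
        (fun b : ℝ => (b : ℂ) ^ (w - 1) * (f t * (Real.exp (-(b * t ^ 2)) : ℂ)))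
        (volume.restrict (Set.Ioi 0)) := by
      refine AEStronglyMeasurable.mul ?_ ?_
      · exact (Measurable.pow_const (by fun_prop) _).aestronglyMeasurable
      · exact Measurable.aestronglyMeasurable (by fun_prop)
    refine (integrable_norm_iff hsm).1 ?_
    refine IntegrableOn.congr_fun ?_ (fun b hb => (hnorm t b hb).symm) measurableSet_Ioi
    refine Integrable.const_mul ?_ _
    have h := integrableOn_rpow_mul_exp_neg_mul_rpow (p := 1) (s := w.re - 1) (b := t ^ 2)
      (by linarith) one_pos (by positivity)
    simpa [IntegrableOn] using h
  · refine IntegrableOn.congr_fun (hfw.norm.mul_const (Real.Gamma w.re)) (fun t ht => ?_)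
      measurableSet_Ioi
    have ht0 : (0:ℝ) < t := ht
    have hpow : (1 / t ^ 2) ^ w.re = t ^ (-(2 * w.re)) := by
      have h := congrArg norm (one_div_sq_cpow ht0 w)
      have h1 : (1 / ((t ^ 2 : ℝ) : ℂ)) = ((1 / t ^ 2 : ℝ) : ℂ) := by push_cast; ring
      rw [h1, Complex.norm_cpow_eq_rpow_re_of_pos (by positivity),
        Complex.norm_cpow_eq_rpow_re_of_pos ht0] at h
      simpa using h
    simp only [Function.uncurry]
    rw [setIntegral_congr_fun measurableSet_Ioi (hnorm t), integral_const_mul,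
      Real.integral_rpow_mul_exp_neg_mul_Ioi hw (by positivity), hpow, norm_mul,
      Complex.norm_cpow_eq_rpow_re_of_pos ht0]
    simp
    ring

lemma mellin_gaussianTransform {f : ℝ → ℂ} {w : ℂ} (hw : 0 < w.re)
    (hf : AEStronglyMeasurable f (volume.restrict (Set.Ioi 0)))
    (hfw : IntegrableOn (fun t : ℝ => (t : ℂ) ^ (-(2 * w)) * f t) (Set.Ioi 0)) :
    mellin (gaussianTransform f) w =
      Complex.Gamma w * ∫ t in Set.Ioi (0:ℝ), (t : ℂ) ^ (-(2 * w)) * f t := by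
  simp only [mellin, gaussianTransform, smul_eq_mul, ← integral_const_mul]
  rw [integral_integral_swap (integrable_cpow_mul_gaussian hw hf hfw)]
  refine setIntegral_congr_fun measurableSet_Ioi fun t ht => ?_
  have ht0 : (0:ℝ) < t := ht
  have h := Complex.integral_cpow_mul_exp_neg_mul_Ioi hw (r := t ^ 2) (by positivity)
  rw [one_div_sq_cpow ht0] at h
  calc ∫ b in Set.Ioi (0:ℝ), (b : ℂ) ^ (w - 1) * (f t * (Real.exp (-(b * t ^ 2)) : ℂ))
      = ∫ b in Set.Ioi (0:ℝ), f t * ((b : ℂ) ^ (w - 1) *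
          Complex.exp (-(((t ^ 2 : ℝ) : ℂ) * b))) := by
        congr 1 with b
        push_cast
        rw [mul_comm (b : ℂ) ((t : ℂ) ^ 2)]
        ring
    _ = _ := by
        rw [integral_const_mul, h]
        ring

lemma integral_Ioi_exp_neg_mul_sq_mul_cos {b : ℝ} (hb : 0 < b) (s : ℝ) :
    ∫ t in Set.Ioi (0:ℝ), Real.exp (-(b * t ^ 2)) * Real.cos (t * s) =
      Real.sqrt (Real.pi / b) / 2 * Real.exp (-((4 * b)⁻¹ * s ^ 2)) := by
  have hF := fourierIntegral_gaussian (b := (b : ℂ)) (by simpa using hb) (s : ℂ)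
  have hR : ((Real.pi : ℂ) / b) ^ (1 / 2 : ℂ) * Complex.exp (-(s : ℂ) ^ 2 / (4 * b)) =
      ((Real.sqrt (Real.pi / b) * Real.exp (-((4 * b)⁻¹ * s ^ 2)) : ℝ) : ℂ) := by
    rw [Real.sqrt_eq_rpow, Complex.ofReal_mul, Complex.ofReal_cpow (by positivity)]
    push_cast
    congr 2
    field_simp
  have hint : Integrable fun t : ℝ =>
      Complex.exp (Complex.I * s * t) * Complex.exp (-b * (t : ℂ) ^ 2) := by
    refine Integrable.bdd_mul (c := 1) ?_ (by fun_prop) (.of_forall fun t => ?_)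
    · exact integrable_cexp_neg_mul_sq (by simpa using hb)
    · simp [Complex.norm_exp]
  have hre := integral_re hint
  rw [hF, hR] at hre
  have heven := integral_comp_abs
    (f := fun t : ℝ => Real.exp (-(b * t ^ 2)) * Real.cos (t * s))
  have hcos : ∀ t : ℝ, Real.cos (|t| * s) = Real.cos (t * s) := fun t => by
    rw [← Real.cos_abs, abs_mul, abs_abs, ← abs_mul, Real.cos_abs]
  have hpt : ∀ t : ℝ, RCLike.re (Complex.exp (Complex.I * s * t) *
      Complex.exp (-b * (t : ℂ) ^ 2)) = Real.exp (-(b * t ^ 2)) * Real.cos (t * s) := by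
    intro t
    have h1 : Complex.exp (-b * (t : ℂ) ^ 2) = ((Real.exp (-(b * t ^ 2)) : ℝ) : ℂ) := by
      push_cast
      ring_nf
    have h2 : Complex.I * s * t = ((t * s : ℝ) : ℂ) * Complex.I := by
      push_cast
      ring
    rw [h1, h2, mul_comm]
    simp only [RCLike.re_to_complex, Complex.re_ofReal_mul, Complex.exp_ofReal_mul_I_re]
  simp only [hpt] at hre
  simp only [sq_abs, hcos] at heven
  rw [hre, RCLike.re_to_complex, Complex.ofReal_re] at heven
  linarith

lemma gaussianTransform_cosFT {x : ℝ → ℂ} (hx : IntegrableOn x (Set.Ioi 0)) {b : ℝ}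
    (hb : 0 < b) :
    gaussianTransform (cosFT x) b =
      (2 : ℂ) ^ (-(1 / 2) : ℂ) • (b : ℂ) ^ (-(1 / 2) : ℂ) •
        gaussianTransform x (4 * b)⁻¹ := by
  have hgauss : IntegrableOn (fun t : ℝ => ((Real.exp (-(b * t ^ 2)) : ℝ) : ℂ)) (Set.Ioi 0) := by
    have h := (integrable_exp_neg_mul_sq hb).integrableOn (s := Set.Ioi 0)
    simp only [neg_mul] at h
    exact Integrable.ofReal (𝕜 := ℂ) h
  have hprod : Integrable (Function.uncurry fun t s : ℝ =>
      ((Real.exp (-(b * t ^ 2)) : ℝ) : ℂ) * x s * (Real.cos (t * s) : ℂ))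
      ((volume.restrict (Set.Ioi 0)).prod (volume.restrict (Set.Ioi 0))) := by
    refine Integrable.mul_bdd (c := 1) (Integrable.mul_prod hgauss hx) ?_ (.of_forall fun p => ?_)
    · exact Continuous.aestronglyMeasurable (by fun_prop)
    · rw [Complex.norm_real]
      exact Real.abs_cos_le_one _
  have hconst : Real.sqrt (2 / Real.pi) * (Real.sqrt (Real.pi / b) / 2) =
      2 ^ (-(1 / 2) : ℝ) * b ^ (-(1 / 2) : ℝ) := by
    rw [Real.rpow_neg zero_le_two, Real.rpow_neg hb.le, ← Real.sqrt_eq_rpow,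
      ← Real.sqrt_eq_rpow, Real.sqrt_div zero_le_two, Real.sqrt_div Real.pi_pos.le]
    have h2 := Real.sq_sqrt (zero_le_two (α := ℝ))
    have := Real.sqrt_pos.2 Real.pi_pos
    have := Real.sqrt_pos.2 hb
    have := Real.sqrt_pos.2 (zero_lt_two (α := ℝ))
    field_simp
    exact h2
  have hconst' : (Real.sqrt (2 / Real.pi) : ℂ) * ((Real.sqrt (Real.pi / b) / 2 : ℝ) : ℂ) =
      (2 : ℂ) ^ (-(1 / 2) : ℂ) * (b : ℂ) ^ (-(1 / 2) : ℂ) := by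
    have h := congrArg (fun r : ℝ => (r : ℂ)) hconst
    beta_reduce at h
    rw [Complex.ofReal_mul, Complex.ofReal_mul, Complex.ofReal_cpow zero_le_two,
      Complex.ofReal_cpow hb.le] at h
    simpa only [Complex.ofReal_neg, Complex.ofReal_div, Complex.ofReal_one,
      Complex.ofReal_ofNat] using h
  calc gaussianTransform (cosFT x) b
      = (Real.sqrt (2 / Real.pi) : ℂ) * ∫ t in Set.Ioi (0:ℝ), ∫ s in Set.Ioi (0:ℝ),
          ((Real.exp (-(b * t ^ 2)) : ℝ) : ℂ) * x s * (Real.cos (t * s) : ℂ) := by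
        simp only [gaussianTransform, cosFT]
        rw [← integral_const_mul]
        congr 1 with t
        simp only [mul_assoc, integral_const_mul]
        ring
    _ = (Real.sqrt (2 / Real.pi) : ℂ) * ∫ s in Set.Ioi (0:ℝ),
          ((Real.sqrt (Real.pi / b) / 2 : ℝ) : ℂ) *
            (x s * ((Real.exp (-((4 * b)⁻¹ * s ^ 2)) : ℝ) : ℂ)) := by
        rw [integral_integral_swap hprod]
        congr 2 with s
        have h := congrArg (fun r : ℝ => (r : ℂ)) (integral_Ioi_exp_neg_mul_sq_mul_cos hb s)
        simp only [← integral_complex_ofReal, Complex.ofReal_mul] at h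
        calc _ = x s * ∫ t in Set.Ioi (0:ℝ),
              ((Real.exp (-(b * t ^ 2)) : ℝ) : ℂ) * (Real.cos (t * s) : ℂ) := by
              rw [← integral_const_mul]
              congr 1 with t
              ring
          _ = _ := by
              rw [h]
              ring
    _ = _ := by
        rw [integral_const_mul, ← mul_assoc, hconst', smul_eq_mul, smul_eq_mul, mul_assoc,
          gaussianTransform]

lemma mellin_gaussianTransform_cosFT {x : ℝ → ℂ} (hx : IntegrableOn x (Set.Ioi 0)) (ζ : ℂ) :
    mellin (gaussianTransform (cosFT x)) (1 / 2 - ζ / 2) =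
      (2 : ℂ) ^ (ζ - 1 / 2) * mellin (gaussianTransform x) (ζ / 2) := by
  have hcongr : mellin (gaussianTransform (cosFT x)) (1 / 2 - ζ / 2) =
      mellin (fun b : ℝ => (2 : ℂ) ^ (-(1 / 2) : ℂ) • (b : ℂ) ^ (-(1 / 2) : ℂ) •
        gaussianTransform x (4 * b)⁻¹) (1 / 2 - ζ / 2) :=
    setIntegral_congr_fun measurableSet_Ioi fun b hb => by
      simp only [gaussianTransform_cosFT hx hb]
  have hpow : (2 : ℂ) ^ (-(1 / 2) : ℂ) * ((4 : ℝ) : ℂ) ^ (ζ / 2) = (2 : ℂ) ^ (ζ - 1 / 2) := by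
    have h4 : ((4 : ℝ) : ℂ) = ((2 : ℝ) : ℂ) * ((2 : ℝ) : ℂ) := by norm_num
    rw [h4, Complex.mul_cpow_ofReal_nonneg zero_le_two zero_le_two, Complex.ofReal_ofNat,
      ← Complex.cpow_add _ _ two_ne_zero, ← Complex.cpow_add _ _ two_ne_zero]
    congr 1
    ring
  rw [hcongr, mellin_const_smul, mellin_cpow_smul,
    mellin_comp_mul_left (fun b => gaussianTransform x b⁻¹) _ four_pos, mellin_comp_inv]
  have he : -(1 / 2 - ζ / 2 + -(1 / 2)) = ζ / 2 := by ring
  rw [he, smul_eq_mul, smul_eq_mul, ← mul_assoc, hpow]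

/-- For a "c-good" function `x` (integrable and square integrable on `(0,∞)`, with
integrable cosine transform, both continuous on `[0,∞)` and vanishing at `+∞`), the
Mellin transform of `x̂_c` on the line `Re ζ = 1/2` satisfies
`φ_{x̂_c}(ζ) = φ_x(1−ζ)·2^{ζ−1/2}·Γ(ζ/2)/Γ(1/2−ζ/2)`, where `φ_{x̂_c}(ζ)` is the limit of
`∫₀^R t^{ζ−1} x̂_c(t) dt` as `R → ∞` and `φ_x(1−ζ) = ∫₀^∞ t^{−ζ} x(t) dt`. -/
theorem mellin_of_cosine_transform (x : ℝ → ℂ)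
    (hx1 : IntegrableOn x (Set.Ioi 0) volume)
    (hx2 : IntegrableOn (fun t => ‖x t‖ ^ 2) (Set.Ioi 0) volume)
    (hc1 : IntegrableOn (cosFT x) (Set.Ioi 0) volume)
    (hxc : ContinuousOn x (Set.Ici 0))
    (hcc : ContinuousOn (cosFT x) (Set.Ici 0))
    (hx0 : Filter.Tendsto x Filter.atTop (nhds 0))
    (hc0 : Filter.Tendsto (cosFT x) Filter.atTop (nhds 0)) :
    ∀ ζ : ℂ, ζ.re = 1 / 2 →
      Filter.Tendsto (fun R : ℝ => ∫ t in (0:ℝ)..R, (t : ℂ) ^ (ζ - 1) * cosFT x t)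
        Filter.atTop
        (nhds ((∫ t in Set.Ioi (0:ℝ), (t : ℂ) ^ (-ζ) * x t) *
          (2 : ℂ) ^ (ζ - 1 / 2) * Complex.Gamma (ζ / 2) /
            Complex.Gamma (1 / 2 - ζ / 2))) := by
  intro ζ hζ
  have hcw : IntegrableOn (fun t : ℝ => (t : ℂ) ^ (ζ - 1) * cosFT x t) (Set.Ioi 0) :=
    integrableOn_Ioi_cpow_mul (by norm_num [hζ]) (by norm_num [hζ]) hc1 hcc
  have hxw : IntegrableOn (fun t : ℝ => (t : ℂ) ^ (-ζ) * x t) (Set.Ioi 0) :=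
    integrableOn_Ioi_cpow_mul (by norm_num [hζ]) (by norm_num [hζ]) hx1 hxc
  have hec : ζ - 1 = -(2 * (1 / 2 - ζ / 2)) := by ring
  have hex : -ζ = -(2 * (ζ / 2)) := by ring
  have hre : 0 < (1 / 2 - ζ / 2 : ℂ).re := by norm_num [hζ]
  have hre' : 0 < (ζ / 2 : ℂ).re := by norm_num [hζ]
  have key := mellin_gaussianTransform_cosFT hx1 ζ
  rw [mellin_gaussianTransform hre hc1.aestronglyMeasurable (by rwa [← hec]),
    mellin_gaussianTransform hre' hx1.aestronglyMeasurable (by rwa [← hex]), ← hec, ← hex] at key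
  have hval : (∫ t in Set.Ioi (0:ℝ), (t : ℂ) ^ (-ζ) * x t) * (2 : ℂ) ^ (ζ - 1 / 2) *
      Complex.Gamma (ζ / 2) / Complex.Gamma (1 / 2 - ζ / 2) =
      ∫ t in Set.Ioi (0:ℝ), (t : ℂ) ^ (ζ - 1) * cosFT x t := by
    rw [div_eq_iff (Complex.Gamma_ne_zero_of_re_pos hre),
      mul_comm _ (Complex.Gamma (1 / 2 - ζ / 2)), key]
    ring
  rw [hval]
  exact intervalIntegral_tendsto_integral_Ioi 0 hcw Filter.tendsto_id
end

section
/- Let x : [0,∞) → ℂ be such that x is integrable and square integrable on (0,∞), its cosine Fourier transform x̂_c(t) = √(2/π)·∫₀^∞ x(s)·cos(ts) ds is integrable on (0,∞), and both x and x̂_c are continuous on [0,∞) and tend to 0 at +∞. Then x = x̂_c (i.e., the even extension of x to ℝ is an eigenfunction of the Fourier operator with eigenvalue 1) if and only if the Mellin transform φ_x(ζ) = ∫₀^∞ t^{ζ−1} x(t) dt satisfies the functional equation φ_x(1/2 + iη) = φ_x(1/2 − iη) · 2^{iη} · Γ(1/4 + iη/2)/Γ(1/4 − iη/2) for all η ∈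 ℝ; equivalently, if and only if the function ψ(iη) = φ_x(1/2 + iη) · 2^{−iη/2} / Γ(1/4 + iη/2) is even in η. -/
open MeasureTheory

/-- The Mellin transform `φ_x(ζ) = ∫₀^∞ t^{ζ−1} x(t) dt`. -/
noncomputable def mellin' (x : ℝ → ℂ) (ζ : ℂ) : ℂ :=
  ∫ t in Set.Ioi (0:ℝ), (t : ℂ) ^ (ζ - 1) * x t

open Set

lemma mellinConvergent_of_continuousOn_of_integrableOn {f : ℝ → ℂ} (hc : ContinuousOn f (Ici 0))
    (hi : IntegrableOn f (Ioi 0)) {s : ℂ} (hs : 0 < s.re) (hs1 : s.re ≤ 1) :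
    MellinConvergent f s := by
  have hm : AEStronglyMeasurable (fun t : ℝ => (t : ℂ) ^ (s - 1) • f t)
      (volume.restrict (Ioi 0)) := by
    refine ContinuousOn.aestronglyMeasurable ?_ measurableSet_Ioi
    refine ContinuousOn.fun_smul (f := fun t : ℝ => (t : ℂ) ^ (s - 1)) (fun t ht => ?_)
      (hc.mono Ioi_subset_Ici_self)
    exact (Complex.continuousAt_ofReal_cpow_const _ _ (Or.inr (ne_of_gt ht))).continuousWithinAt
  obtain ⟨C, hC⟩ := isCompact_Icc.exists_bound_of_continuousOn
    (hc.mono (Icc_subset_Ici_self : Icc (0 : ℝ) 1 ⊆ Ici 0))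
  rw [MellinConvergent, ← Ioc_union_Ioi_eq_Ioi zero_le_one]
  refine IntegrableOn.union ?_ ?_
  · have hpow : IntegrableOn (fun t : ℝ => t ^ (s.re - 1) * C) (Ioc 0 1) := by
      refine Integrable.mul_const ?_ C
      exact (intervalIntegrable_iff_integrableOn_Ioc_of_le zero_le_one).mp
        (intervalIntegral.intervalIntegrable_rpow' (by linarith))
    refine Integrable.mono' hpow (hm.mono_set Ioc_subset_Ioi_self) ?_
    filter_upwards [ae_restrict_mem measurableSet_Ioc] with t ht
    rw [norm_smul, Complex.norm_cpow_eq_rpow_re_of_pos ht.1, Complex.sub_re, Complex.one_re]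
    exact mul_le_mul_of_nonneg_left (hC t ⟨ht.1.le, ht.2⟩) (Real.rpow_nonneg ht.1.le _)
  · have hsub : Ioi (1 : ℝ) ⊆ Ioi 0 := Ioi_subset_Ioi zero_le_one
    refine Integrable.mono' (hi.mono_set hsub).norm (hm.mono_set hsub) ?_
    filter_upwards [ae_restrict_mem measurableSet_Ioi] with t ht
    have ht' : (1 : ℝ) < t := ht
    rw [norm_smul, Complex.norm_cpow_eq_rpow_re_of_pos (by linarith), Complex.sub_re,
      Complex.one_re]
    exact mul_le_of_le_one_left (norm_nonneg _)
      (Real.rpow_le_one_of_one_le_of_nonpos ht'.le (by linarith))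

/-- The Gaussian average `a ↦ ∫₀^∞ f(t) e^{-at²/2} dt`. -/
noncomputable def gaussianAverage (f : ℝ → ℂ) (a : ℝ) : ℂ :=
  ∫ t in Ioi (0 : ℝ), f t * (Real.exp (-(t ^ 2 / 2 * a)) : ℂ)

lemma one_div_sq_div_two_cpow {t : ℝ} (ht : 0 < t) (w : ℂ) :
    (1 / ((t ^ 2 / 2 : ℝ) : ℂ)) ^ w = 2 ^ w * (t : ℂ) ^ (1 - 2 * w - 1) := by
  have h : (1 / ((t ^ 2 / 2 : ℝ) : ℂ)) = ((2 : ℝ) : ℂ) * ((t⁻¹ * t⁻¹ : ℝ) : ℂ) := by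
    push_cast; field_simp
  rw [h, Complex.mul_cpow_ofReal_nonneg zero_le_two (by positivity), Complex.ofReal_mul,
    Complex.mul_cpow_ofReal_nonneg (by positivity) (by positivity),
    ← Complex.cpow_add _ _ (by simpa using ht.ne'), Complex.ofReal_inv,
    Complex.inv_cpow _ _ (by rw [Complex.arg_ofReal_of_nonneg ht.le]; exact Real.pi_pos.ne),
    ← Complex.cpow_neg]
  norm_num
  ring_nf

lemma mellin_gaussianAverage {f : ℝ → ℂ} {w : ℂ}
    (hm : AEStronglyMeasurable f (volume.restrict (Ioi 0)))
    (hf : MellinConvergent f (1 - 2 * w)) (hw : 0 < w.re) :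
    mellin (gaussianAverage f) w = 2 ^ w * Complex.Gamma w * mellin f (1 - 2 * w) := by
  let F : ℝ → ℝ → ℂ := fun t a =>
    f t * ((a : ℂ) ^ (w - 1) * Complex.exp (-(((t ^ 2 / 2 : ℝ) : ℂ) * a)))
  have hnorm : ∀ t a : ℝ, 0 < a →
      ‖F t a‖ = ‖f t‖ * (a ^ (w.re - 1) * Real.exp (-(t ^ 2 / 2 * a))) := by
    intro t a ha
    simp only [F, norm_mul, Complex.norm_cpow_eq_rpow_re_of_pos ha, Complex.sub_re,
      Complex.one_re, Complex.norm_exp]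
    congr 3
    norm_cast
  have hreal : ∀ t : ℝ, 0 < t → ∫ a in Ioi (0 : ℝ), a ^ (w.re - 1) * Real.exp (-(t ^ 2 / 2 * a))
      = (1 / (t ^ 2 / 2)) ^ w.re * Real.Gamma w.re := fun t ht =>
    Real.integral_rpow_mul_exp_neg_mul_Ioi hw (by positivity)
  have hFm : AEStronglyMeasurable (Function.uncurry F)
      ((volume.restrict (Ioi 0)).prod (volume.restrict (Ioi 0))) := by
    refine hm.comp_fst.mul (Measurable.aestronglyMeasurable ?_)
    fun_prop
  have hFi : Integrable (Function.uncurry F)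
      ((volume.restrict (Ioi 0)).prod (volume.restrict (Ioi 0))) := by
    rw [integrable_prod_iff hFm]
    constructor
    · filter_upwards [ae_restrict_mem measurableSet_Ioi] with t ht
      have ht' : (0 : ℝ) < t := ht
      have hint : IntegrableOn (fun a : ℝ => a ^ (w.re - 1) * Real.exp (-(t ^ 2 / 2 * a)))
          (Ioi 0) := by
        refine .of_integral_ne_zero ?_
        rw [hreal t ht']
        have := Real.Gamma_pos_of_pos hw
        positivity
      refine Integrable.mono' (hint.const_mul ‖f t‖) ?_ ?_
      · refine Measurable.aestronglyMeasurable ?_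
        simp only [Function.uncurry_apply_pair, F]
        fun_prop
      · filter_upwards [ae_restrict_mem measurableSet_Ioi] with a ha
        exact (hnorm t a ha).le
    · refine Integrable.congr (hf.norm.const_mul (2 ^ w.re * Real.Gamma w.re)) ?_
      filter_upwards [ae_restrict_mem measurableSet_Ioi] with t ht
      have : ∫ a in Ioi (0 : ℝ), ‖Function.uncurry F (t, a)‖ =
          ‖f t‖ * ((1 / (t ^ 2 / 2)) ^ w.re * Real.Gamma w.re) := by
        rw [← hreal t ht, ← integral_const_mul]
        exact setIntegral_congr_fun measurableSet_Ioi fun a ha => hnorm t a ha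
      rw [this]
      have ht' : (0 : ℝ) < t := ht
      have h := congrArg norm (one_div_sq_div_two_cpow ht w)
      rw [← Complex.ofReal_one, ← Complex.ofReal_div, Complex.norm_cpow_eq_rpow_re_of_pos
        (by positivity), norm_mul, ← Complex.ofReal_ofNat, Complex.norm_cpow_eq_rpow_re_of_pos
        two_pos, Complex.ofReal_one, Complex.ofReal_ofNat] at h
      rw [h, norm_smul]
      ring
  calc mellin (gaussianAverage f) w
      = ∫ a in Ioi (0 : ℝ), ∫ t in Ioi (0 : ℝ), F t a := by
        refine integral_congr_ae (Filter.Eventually.of_forall fun a => ?_)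
        simp only [gaussianAverage, smul_eq_mul]
        rw [← integral_const_mul]
        refine integral_congr_ae (Filter.Eventually.of_forall fun t => ?_)
        simp only [F]
        push_cast
        ring
    _ = ∫ t in Ioi (0 : ℝ), ∫ a in Ioi (0 : ℝ), F t a := (integral_integral_swap hFi).symm
    _ = 2 ^ w * Complex.Gamma w * mellin f (1 - 2 * w) := by
        rw [mellin, ← integral_const_mul]
        refine setIntegral_congr_fun measurableSet_Ioi fun t ht => ?_
        have ht' : (0 : ℝ) < t := ht
        simp only [F]
        rw [integral_const_mul, Complex.integral_cpow_mul_exp_neg_mul_Ioi hw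
          (show 0 < t ^ 2 / 2 by positivity), one_div_sq_div_two_cpow ht', smul_eq_mul]
        ring

lemma integral_cos_mul_gaussian {a : ℝ} (ha : 0 < a) (s : ℝ) :
    ∫ t in Ioi (0 : ℝ), Real.cos (t * s) * Real.exp (-(t ^ 2 / 2 * a)) =
      Real.sqrt (2 * Real.pi / a) / 2 * Real.exp (-(s ^ 2 / 2 * a⁻¹)) := by
  have ha2 : 0 < ((a / 2 : ℝ) : ℂ).re := by simpa using ha
  have hF := fourierIntegral_gaussian ha2 (s : ℂ)
  have hint : Integrable fun t : ℝ =>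
      Complex.exp (Complex.I * s * t) * Complex.exp (-((a / 2 : ℝ) : ℂ) * t ^ 2) := by
    refine Integrable.mono (integrable_cexp_neg_mul_sq ha2) (by fun_prop)
      (Filter.Eventually.of_forall fun t => ?_)
    simp [Complex.norm_exp]
  have hre := Complex.reCLM.integral_comp_comm hint
  have hval : ((Real.pi / ((a / 2 : ℝ) : ℂ)) ^ (1 / 2 : ℂ) *
      Complex.exp (-(s : ℂ) ^ 2 / (4 * ((a / 2 : ℝ) : ℂ)))) =
      ((Real.sqrt (2 * Real.pi / a) * Real.exp (-(s ^ 2 / 2 * a⁻¹)) : ℝ) : ℂ) := by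
    rw [Complex.ofReal_mul, Real.sqrt_eq_rpow, Complex.ofReal_cpow (by positivity),
      Complex.ofReal_exp]
    congr 2
    · push_cast; field_simp
    · push_cast; rfl
    · push_cast; field_simp; norm_num
  rw [hF, hval, Complex.reCLM_apply, Complex.ofReal_re] at hre
  have habs := integral_comp_abs
    (f := fun t : ℝ => Real.cos (t * s) * Real.exp (-(t ^ 2 / 2 * a)))
  have hcongr : ∫ t : ℝ, Real.cos (|t| * s) * Real.exp (-(|t| ^ 2 / 2 * a)) =
      ∫ t : ℝ, Complex.reCLM
        (Complex.exp (Complex.I * s * t) * Complex.exp (-((a / 2 : ℝ) : ℂ) * t ^ 2)) := by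
    refine integral_congr_ae (Filter.Eventually.of_forall fun t => ?_)
    have hcos : Real.cos (|t| * s) = Real.cos (s * t) := by
      rcases abs_choice t with h | h <;> rw [h]
      · rw [mul_comm]
      · rw [neg_mul, Real.cos_neg, mul_comm]
    have hexp : Complex.exp (-((a / 2 : ℝ) : ℂ) * t ^ 2) =
        (Real.exp (-(t ^ 2 / 2 * a)) : ℂ) := by
      push_cast; congr 1; ring
    have hI : Complex.I * s * t = ((s * t : ℝ) : ℂ) * Complex.I := by push_cast; ring
    simp only [Complex.reCLM_apply]
    rw [hexp, Complex.re_mul_ofReal, hI, Complex.exp_ofReal_mul_I_re, hcos, sq_abs]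
  rw [hcongr, hre] at habs
  linarith

lemma gaussianAverage_cosFT {x : ℝ → ℂ} (hx : IntegrableOn x (Ioi 0)) {a : ℝ} (ha : 0 < a) :
    gaussianAverage (cosFT x) a = (a : ℂ) ^ (-(1 / 2) : ℂ) • gaussianAverage x a⁻¹ := by
  have hg : IntegrableOn (fun t : ℝ => Real.exp (-(t ^ 2 / 2 * a))) (Ioi 0) := by
    have := (integrable_exp_neg_mul_sq (half_pos ha)).integrableOn (s := Ioi 0)
    refine this.congr (Filter.Eventually.of_forall fun t => ?_)
    simp only
    congr 1
    ring
  let F : ℝ → ℝ → ℂ := fun t s =>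
    x s * ((Real.cos (t * s) * Real.exp (-(t ^ 2 / 2 * a)) : ℝ) : ℂ)
  have hFi : Integrable (Function.uncurry F)
      ((volume.restrict (Ioi 0)).prod (volume.restrict (Ioi 0))) := by
    refine Integrable.mono (hg.ofReal (𝕜 := ℂ).mul_prod hx) ?_
      (Filter.Eventually.of_forall fun z => ?_)
    · refine hx.aestronglyMeasurable.comp_snd.mul (Measurable.aestronglyMeasurable ?_)
      fun_prop
    · simp only [Function.uncurry, F, norm_mul, Complex.norm_real, Real.norm_eq_abs,
        RCLike.norm_ofReal]
      rw [mul_comm ‖x z.2‖]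
      refine mul_le_mul_of_nonneg_right ?_ (norm_nonneg _)
      exact mul_le_of_le_one_left (abs_nonneg _) (Real.abs_cos_le_one _)
  have hconst :
      Real.sqrt (2 / Real.pi) * (Real.sqrt (2 * Real.pi / a) / 2) = a ^ (-(1 / 2) : ℝ) := by
    rw [Real.rpow_neg ha.le, ← Real.sqrt_eq_rpow, ← mul_div_assoc, ← Real.sqrt_mul (by positivity),
      show 2 / Real.pi * (2 * Real.pi / a) = 2 ^ 2 / a by field_simp,
      Real.sqrt_div (by positivity), Real.sqrt_sq zero_le_two]
    field_simp
  calc gaussianAverage (cosFT x) a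
      = ∫ t in Ioi (0 : ℝ), (Real.sqrt (2 / Real.pi) : ℂ) * ∫ s in Ioi (0 : ℝ), F t s := by
        refine integral_congr_ae (Filter.Eventually.of_forall fun t => ?_)
        simp only [cosFT, F]
        rw [mul_assoc, ← integral_mul_const]
        simp only [Complex.ofReal_mul, mul_assoc]
    _ = (Real.sqrt (2 / Real.pi) : ℂ) * ∫ s in Ioi (0 : ℝ), ∫ t in Ioi (0 : ℝ), F t s := by
        rw [integral_const_mul, integral_integral_swap hFi]
    _ = ∫ s in Ioi (0 : ℝ), ((a ^ (-(1 / 2) : ℝ) : ℝ) : ℂ) *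
          (x s * (Real.exp (-(s ^ 2 / 2 * a⁻¹)) : ℂ)) := by
        rw [← integral_const_mul]
        refine integral_congr_ae (Filter.Eventually.of_forall fun s => ?_)
        simp only [F]
        rw [integral_const_mul, integral_complex_ofReal, integral_cos_mul_gaussian ha, ← hconst]
        push_cast
        ring
    _ = (a : ℂ) ^ (-(1 / 2) : ℂ) • gaussianAverage x a⁻¹ := by
        rw [integral_const_mul, Complex.ofReal_cpow ha.le, smul_eq_mul, gaussianAverage]
        push_cast
        rfl

lemma mellin_cosFT {x : ℝ → ℂ} (hx : IntegrableOn x (Ioi 0)) (hxc : ContinuousOn x (Ici 0))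
    (hc : IntegrableOn (cosFT x) (Ioi 0)) (hcc : ContinuousOn (cosFT x) (Ici 0)) (η : ℝ) :
    mellin (cosFT x) (1 / 2 + η * Complex.I) =
      mellin x (1 / 2 - η * Complex.I) * 2 ^ (η * Complex.I) *
        Complex.Gamma (1 / 4 + η * Complex.I / 2) /
          Complex.Gamma (1 / 4 - η * Complex.I / 2) := by
  set w : ℂ := 1 / 4 - η * Complex.I / 2 with hw
  have hwre : w.re = 1 / 4 := by simp [hw]
  have h1 : (1 / 2 + η * Complex.I : ℂ) = 1 - 2 * w := by rw [hw]; ring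
  have h2 : (1 / 2 - η * Complex.I : ℂ) = 1 - 2 * (1 / 2 - w) := by rw [hw]; ring
  have h3 : (1 / 4 + η * Complex.I / 2 : ℂ) = 1 / 2 - w := by rw [hw]; ring
  have h4 : (η * Complex.I : ℂ) = (1 / 2 - w) - w := by rw [hw]; ring
  have hA := mellin_gaussianAverage hc.aestronglyMeasurable
    (mellinConvergent_of_continuousOn_of_integrableOn hcc hc (s := 1 - 2 * w)
      (by simp [hwre]; norm_num) (by simp [hwre])) (by rw [hwre]; norm_num)
  have hB := mellin_gaussianAverage hx.aestronglyMeasurable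
    (mellinConvergent_of_continuousOn_of_integrableOn hxc hx (s := 1 - 2 * (1 / 2 - w))
      (by simp [hwre]; norm_num) (by simp [hwre]; norm_num)) (by simp [hwre]; norm_num)
  have hAB : mellin (gaussianAverage (cosFT x)) w = mellin (gaussianAverage x) (1 / 2 - w) := by
    calc mellin (gaussianAverage (cosFT x)) w
        = mellin (fun a : ℝ => (a : ℂ) ^ (-(1 / 2) : ℂ) • gaussianAverage x a⁻¹) w := by
          refine setIntegral_congr_fun measurableSet_Ioi fun a ha => ?_
          simp only [gaussianAverage_cosFT hx ha]
      _ = mellin (gaussianAverage x) (1 / 2 - w) := by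
          rw [mellin_cpow_smul, mellin_comp_inv]
          congr 1
          ring
  have hG : Complex.Gamma w ≠ 0 := Complex.Gamma_ne_zero_of_re_pos (by rw [hwre]; norm_num)
  have hpow : (2 : ℂ) ^ w ≠ 0 := by simp [Complex.cpow_eq_zero_iff]
  rw [h1, h2, h3, h4, Complex.cpow_sub _ _ two_ne_zero, eq_div_iff hG]
  rw [hA, hB] at hAB
  rw [mul_right_comm, mul_div_assoc', eq_div_iff hpow]
  linear_combination hAB

lemma eqOn_of_mellin_eq {f g : ℝ → ℂ} (hf : ContinuousOn f (Ici 0)) (hg : ContinuousOn g (Ici 0))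
    {σ : ℝ} (hfm : ∀ η : ℝ, MellinConvergent f (σ + η * Complex.I))
    (hgm : ∀ η : ℝ, MellinConvergent g (σ + η * Complex.I))
    (h : ∀ η : ℝ, mellin f (σ + η * Complex.I) = mellin g (σ + η * Complex.I)) :
    EqOn f g (Ici 0) := by
  have hsub : MellinConvergent (fun t => f t - g t) σ := by
    simpa using (hasMellin_sub (hfm 0) (hgm 0)).1
  have hzero : ∀ η : ℝ, mellin (fun t => f t - g t) (σ + η * Complex.I) = 0 := fun η => by
    rw [(hasMellin_sub (hfm η) (hgm η)).2, h η, sub_self]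
  have hpos : EqOn f g (Ioi 0) := fun t ht => by
    have hcont : ContinuousAt (fun t => f t - g t) t :=
      ((hf.sub hg).continuousAt (Ici_mem_nhds ht))
    have hinv := mellinInv_mellin_eq σ _ ht hsub
      (by simp only [Complex.VerticalIntegrable, hzero]; exact integrable_zero _ _ _) hcont
    simp only [mellinInv, hzero, smul_zero, integral_zero] at hinv
    exact (sub_eq_zero.mp hinv.symm)
  exact hpos.of_subset_closure hf hg Ioi_subset_Ici_self (closure_Ioi (0 : ℝ)).ge

lemma functional_equation_iff_even {A B G H z : ℂ} (hG : G ≠ 0) (hH : H ≠ 0) :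
    A = B * 2 ^ z * G / H ↔ A * 2 ^ (-z / 2) / G = B * 2 ^ (z / 2) / H := by
  have hpow : (2 : ℂ) ^ (z / 2) ≠ 0 := by simp [Complex.cpow_eq_zero_iff]
  have hz : (2 : ℂ) ^ z = 2 ^ (z / 2) * 2 ^ (z / 2) := by
    rw [← Complex.cpow_add _ _ two_ne_zero, add_halves]
  rw [hz, neg_div, Complex.cpow_neg, eq_div_iff hH, div_eq_div_iff hG hH, ← div_eq_mul_inv,
    div_mul_eq_mul_div, div_eq_iff hpow]
  constructor <;> intro h <;> linear_combination h

/-- For a "c-good" function `x`, one has `x = x̂_c` on `[0,∞)` (i.e. the even extension of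
`x` is an eigenfunction of the Fourier operator with eigenvalue `1`) if and only if its
Mellin transform satisfies the functional equation
`φ_x(1/2+iη) = φ_x(1/2−iη)·2^{iη}·Γ(1/4+iη/2)/Γ(1/4−iη/2)` for all real `η`;
equivalently, iff `ψ(iη) = φ_x(1/2+iη)·2^{−iη/2}/Γ(1/4+iη/2)` is an even function of `η`. -/
theorem eigenfunction_iff_mellin_functional_equation (x : ℝ → ℂ)
    (hx1 : IntegrableOn x (Set.Ioi 0) volume)
    (hx2 : IntegrableOn (fun t => ‖x t‖ ^ 2) (Set.Ioi 0) volume)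
    (hc1 : IntegrableOn (cosFT x) (Set.Ioi 0) volume)
    (hxc : ContinuousOn x (Set.Ici 0))
    (hcc : ContinuousOn (cosFT x) (Set.Ici 0))
    (hx0 : Filter.Tendsto x Filter.atTop (nhds 0))
    (hc0 : Filter.Tendsto (cosFT x) Filter.atTop (nhds 0)) :
    ((∀ t : ℝ, 0 ≤ t → x t = cosFT x t) ↔
      (∀ η : ℝ, mellin' x (1 / 2 + (η : ℂ) * Complex.I) =
        mellin' x (1 / 2 - (η : ℂ) * Complex.I) * (2 : ℂ) ^ ((η : ℂ) * Complex.I) *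
          Complex.Gamma (1 / 4 + (η : ℂ) * Complex.I / 2) /
            Complex.Gamma (1 / 4 - (η : ℂ) * Complex.I / 2))) ∧
    ((∀ t : ℝ, 0 ≤ t → x t = cosFT x t) ↔
      (∀ η : ℝ, mellin' x (1 / 2 + (η : ℂ) * Complex.I) *
          (2 : ℂ) ^ (-((η : ℂ) * Complex.I) / 2) /
            Complex.Gamma (1 / 4 + (η : ℂ) * Complex.I / 2) =
        mellin' x (1 / 2 - (η : ℂ) * Complex.I) *
          (2 : ℂ) ^ ((η : ℂ) * Complex.I / 2) /
            Complex.Gamma (1 / 4 - (η : ℂ) * Complex.I / 2))) := by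
  have hconv : ∀ {f : ℝ → ℂ}, ContinuousOn f (Ici 0) → IntegrableOn f (Ioi 0) → ∀ η : ℝ,
      MellinConvergent f (((1 / 2 : ℝ) : ℂ) + η * Complex.I) := fun hf hi η =>
    mellinConvergent_of_continuousOn_of_integrableOn hf hi (by simp) (by simp; norm_num)
  have hmain : (∀ t : ℝ, 0 ≤ t → x t = cosFT x t) ↔
      (∀ η : ℝ, mellin' x (1 / 2 + (η : ℂ) * Complex.I) =
        mellin' x (1 / 2 - (η : ℂ) * Complex.I) * (2 : ℂ) ^ ((η : ℂ) * Complex.I) *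
          Complex.Gamma (1 / 4 + (η : ℂ) * Complex.I / 2) /
            Complex.Gamma (1 / 4 - (η : ℂ) * Complex.I / 2)) := by
    have hmellin : ∀ η : ℝ, mellin' x (1 / 2 - (η : ℂ) * Complex.I) *
        (2 : ℂ) ^ ((η : ℂ) * Complex.I) * Complex.Gamma (1 / 4 + (η : ℂ) * Complex.I / 2) /
          Complex.Gamma (1 / 4 - (η : ℂ) * Complex.I / 2) =
        mellin (cosFT x) (1 / 2 + η * Complex.I) :=
      fun η => (mellin_cosFT hx1 hxc hc1 hcc η).symm
    simp_rw [hmellin]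
    refine ⟨fun h η => setIntegral_congr_fun measurableSet_Ioi fun t ht => ?_, fun h t ht => ?_⟩
    · rw [h t (le_of_lt ht), smul_eq_mul]
    · refine eqOn_of_mellin_eq hxc hcc (hconv hxc hx1) (hconv hcc hc1) (fun η => ?_) ht
      simpa [mellin'] using! h η
  refine ⟨hmain, hmain.trans (forall_congr' fun η => functional_equation_iff_even ?_ ?_)⟩ <;>
  exact Complex.Gamma_ne_zero_of_re_pos (by simp)
end
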